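/- Let A, B, C be three pairwise distinct, pairwise noncrossing nonempty compact convex subsets of ℝ² such that no two of them are tangent and no line is tangent to all three. Then the family {A, B, C} is in convex position if and only if the ordered triple (A, B, C) is clockwise oriented or counterclockwise oriented. -/

import Mathlib

/-!
If the family is in convex position, each body has a point at which some linear functional exceeds
its values on the two other bodies. Such points lie on the frontier of the hull, and none of them
lies between the two others, so they are not collinear and orient the triple.

Conversely, let `a ∈ A` be a frontier point of the hull and suppose `A ⊆ conv (B ∪ C)`. Take a
supporting line at `a`. If it touches both `B` and `C`, it is tangent to all three bodies. Otherwise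
it touches only `B`, say, and then `a ∈ A ∩ B`. Pick `x ∈ A \ B`. The line `ax` meets `B` in a part
of the segment from `a` to `x`, hence inside `A`, so it misses the connected set `B \ A`; thus `A`
contains the part of `B` on one closed side of this line. Now roll the supporting line of `B` along
that side, from `a` to the last point `b` of `B` on the segment from `a` to `x`. It starts beyond
`C` but cannot end so, since a line supporting `B` at `b` and having `x` weakly beyond it must meet
or pass `C` for `x` to lie in `conv (B ∪ C)`. Hence at some moment it supports `C` as well; its
point of contact with `B` belongs to `A`, and so it is tangent to all three bodies.
-/

open Set

noncomputable section

/-- The Euclidean plane. -/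
abbrev Plane : Type := EuclideanSpace ℝ (Fin 2)

/-- The 2×2 determinant of two plane vectors. -/
def det2 (u v : Plane) : ℝ := u 0 * v 1 - u 1 * v 0

/-- A convex body in the plane: nonempty, compact and convex. -/
def ConvexBody2 (A : Set Plane) : Prop := A.Nonempty ∧ IsCompact A ∧ Convex ℝ A

/-- A family of sets is in convex position if removing any member changes the
convex hull of the union of the family. -/
def ConvexPos (F : Set (Set Plane)) : Prop :=
  ∀ A ∈ F, convexHull ℝ (⋃₀ F) ≠ convexHull ℝ (⋃₀ (F \ {A}))

/-- A family is in general position if every 3-element subfamily is in convex position. -/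
def GenPos (F : Set (Set Plane)) : Prop :=
  ∀ G ⊆ F, G.ncard = 3 → ConvexPos G

/-- Two sets are noncrossing if both set differences are connected. -/
def NoncrossingPair (A B : Set Plane) : Prop := IsConnected (A \ B) ∧ IsConnected (B \ A)

/-- Two convex bodies are tangent if they intersect but their interiors are disjoint. -/
def TangentBodies (A B : Set Plane) : Prop :=
  (A ∩ B).Nonempty ∧ interior A ∩ interior B = ∅

/-- The line `{x | f x = c}` (for `f ≠ 0`) is tangent to `A`:
it meets `A` and `A` lies in one of the two closed half-planes it bounds. -/
def TangentLineTo (f : Plane →ₗ[ℝ] ℝ) (c : ℝ) (A : Set Plane) : Prop :=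
  (∃ x ∈ A, f x = c) ∧ ((∀ x ∈ A, f x ≤ c) ∨ (∀ x ∈ A, c ≤ f x))

/-- No line is tangent to three distinct members of the family. -/
def NoTripleTangentLine (F : Set (Set Plane)) : Prop :=
  ∀ f : Plane →ₗ[ℝ] ℝ, f ≠ 0 → ∀ c : ℝ, ∀ A ∈ F, ∀ B ∈ F, ∀ C ∈ F,
    A ≠ B → B ≠ C → A ≠ C →
    ¬ (TangentLineTo f c A ∧ TangentLineTo f c B ∧ TangentLineTo f c C)

/-- The ordered triple `(A₁, A₂, A₃)` is counterclockwise oriented. -/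
def CCWOriented (A₁ A₂ A₃ : Set Plane) : Prop :=
  ∃ a₁ ∈ A₁ ∩ frontier (convexHull ℝ (A₁ ∪ A₂ ∪ A₃)),
  ∃ a₂ ∈ A₂ ∩ frontier (convexHull ℝ (A₁ ∪ A₂ ∪ A₃)),
  ∃ a₃ ∈ A₃ ∩ frontier (convexHull ℝ (A₁ ∪ A₂ ∪ A₃)),
    0 < det2 (a₂ - a₁) (a₃ - a₁)

/-- The ordered triple `(A₁, A₂, A₃)` is clockwise oriented. -/
def CWOriented (A₁ A₂ A₃ : Set Plane) : Prop :=
  ∃ a₁ ∈ A₁ ∩ frontier (convexHull ℝ (A₁ ∪ A₂ ∪ A₃)),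
  ∃ a₂ ∈ A₂ ∩ frontier (convexHull ℝ (A₁ ∪ A₂ ∪ A₃)),
  ∃ a₃ ∈ A₃ ∩ frontier (convexHull ℝ (A₁ ∪ A₂ ∪ A₃)),
    det2 (a₂ - a₁) (a₃ - a₁) < 0

/-- An affine line in the plane: an affine subspace with 1-dimensional direction. -/
def IsLine (L : AffineSubspace ℝ Plane) : Prop := Module.finrank ℝ L.direction = 1

/-- `L` is a transversal line of the family `F`. -/
def TransversalLine (L : AffineSubspace ℝ Plane) (F : Set (Set Plane)) : Prop :=
  IsLine L ∧ ∀ A ∈ F, ((L : Set Plane) ∩ A).Nonempty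

section ConvexHull

variable {E : Type*} [AddCommGroup E] [Module ℝ E]

lemma convexHull_union_eq_right_iff {s t : Set E} :
    convexHull ℝ (s ∪ t) = convexHull ℝ t ↔ s ⊆ convexHull ℝ t := by
  refine ⟨fun h => h ▸ subset_union_left.trans (subset_convexHull ℝ _), fun h => ?_⟩
  exact (convexHull_min (union_subset h (subset_convexHull ℝ t)) (convex_convexHull ℝ t)).antisymm
    (convexHull_mono subset_union_right)

lemma le_of_mem_convexHull {s : Set E} {f : E →ₗ[ℝ] ℝ} {m : ℝ} (hs : ∀ y ∈ s, f y ≤ m) {x : E}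
    (hx : x ∈ convexHull ℝ s) : f x ≤ m := by
  obtain ⟨y, hy, hxy⟩ :=
    (f.convexOn convex_univ).exists_ge_of_mem_convexHull (subset_univ s) hx
  exact hxy.trans (hs y hy)

lemma mem_convexHull_left_of_le {s t : Set E} (hs : s.Nonempty) (ht : t.Nonempty)
    {f : E →ₗ[ℝ] ℝ} {m : ℝ} (hfs : ∀ y ∈ s, f y ≤ m) (hft : ∀ y ∈ t, f y < m) {x : E}
    (hx : x ∈ convexHull ℝ (s ∪ t)) (hm : m ≤ f x) : x ∈ convexHull ℝ s := by
  rw [convexHull_union hs ht, mem_convexJoin] at hx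
  obtain ⟨y, hy, z, hz, α, β, hα, hβ, hαβ, rfl⟩ := hx
  have hfy : f y ≤ m := le_of_mem_convexHull hfs hy
  have hfz : f z < m := by
    obtain ⟨z', hz', hzz'⟩ :=
      (f.convexOn convex_univ).exists_ge_of_mem_convexHull (subset_univ t) hz
    exact hzz'.trans_lt (hft z' hz')
  simp only [map_add, map_smul, smul_eq_mul] at hm
  obtain rfl : α = 1 - β := by linarith
  obtain rfl : β = 0 := by nlinarith
  simpa using hy

lemma not_wbtw_of_lt {f : E →ₗ[ℝ] ℝ} {x y z : E} (hxy : f x < f y) (hzy : f z < f y) :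
    ¬ Wbtw ℝ x y z := fun h =>
  ((f.convexOn convex_univ).le_max_of_mem_segment (mem_univ x) (mem_univ z)
    h.mem_segment).not_gt (max_lt hxy hzy)

lemma not_collinear_of_forall_lt {a b c : E} {f g h : E →ₗ[ℝ] ℝ}
    (hfb : f b < f a) (hfc : f c < f a) (hga : g a < g b) (hgc : g c < g b)
    (hha : h a < h c) (hhb : h b < h c) : ¬ Collinear ℝ {a, b, c} := fun hcol => by
  rcases hcol.wbtw_or_wbtw_or_wbtw with habc | hbca | hcab
  · exact not_wbtw_of_lt hga hgc habc
  · exact not_wbtw_of_lt hhb hha hbca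
  · exact not_wbtw_of_lt hfc hfb hcab

lemma mem_of_add_smul_sub_mem {B : Set E} (hB : Convex ℝ B) {a x : E} {s : ℝ} (ha : a ∈ B)
    (hs : 1 ≤ s) (h : a + s • (x - a) ∈ B) : x ∈ B := by
  have hs0 : 0 < s := by linarith
  have hx : a + s⁻¹ • (a + s • (x - a) - a) = x := by
    rw [add_sub_cancel_left, inv_smul_smul₀ hs0.ne', add_sub_cancel]
  exact hx ▸ hB.add_smul_sub_mem ha h ⟨inv_nonneg.2 hs0.le, inv_le_one_of_one_le₀ hs⟩

lemma mem_segment_of_isMaxOn {B : Set E} (hB : Convex ℝ B) {u : E →ₗ[ℝ] ℝ} {a x y : E}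
    (ha : a ∈ B) (hu : IsMaxOn u B a) (hx : x ∉ B) (hux : u x < u a) (hy : y ∈ B)
    (hyax : y - a ∈ Submodule.span ℝ {x - a}) : y ∈ segment ℝ a x := by
  obtain ⟨s, hs⟩ := Submodule.mem_span_singleton.1 hyax
  obtain rfl : y = a + s • (x - a) := by rw [hs, add_sub_cancel]
  rw [segment_eq_image']
  refine ⟨s, ⟨?_, ?_⟩, rfl⟩
  · have hle : u (a + s • (x - a)) ≤ u a := hu hy
    simp only [map_add, map_smul, map_sub, smul_eq_mul] at hle
    nlinarith
  · exact (not_le.1 fun hs1 => hx (mem_of_add_smul_sub_mem hB ha hs1 hy)).le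

end ConvexHull

section Separation

lemma isCompact_convexJoin {E : Type*} [AddCommGroup E] [Module ℝ E] [TopologicalSpace E]
    [IsTopologicalAddGroup E] [ContinuousSMul ℝ E] {s t : Set E} (hs : IsCompact s)
    (ht : IsCompact t) : IsCompact (convexJoin ℝ s t) := by
  have himage : convexJoin ℝ s t =
      (fun q : ℝ × E × E => AffineMap.lineMap q.2.1 q.2.2 q.1) '' Icc (0 : ℝ) 1 ×ˢ s ×ˢ t := by
    ext x
    simp only [mem_convexJoin, segment_eq_image_lineMap, mem_image, mem_prod, Prod.exists]
    grind
  rw [himage]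
  simp only [AffineMap.lineMap_apply_module']
  exact (isCompact_Icc.prod (hs.prod ht)).image (by fun_prop)

lemma exists_isMaxOn_forall_lt_of_not_subset {E : Type*} [AddCommGroup E] [Module ℝ E]
    [TopologicalSpace E] [IsTopologicalAddGroup E] [ContinuousSMul ℝ E] [LocallyConvexSpace ℝ E]
    {A K : Set E} (hA : IsCompact A) (hK : Convex ℝ K) (hKc : IsClosed K) (h : ¬ A ⊆ K) :
    ∃ a ∈ A, ∃ f : StrongDual ℝ E, IsMaxOn f A a ∧ ∀ y ∈ K, f y < f a := by
  obtain ⟨x, hxA, hxK⟩ := not_subset.1 h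
  obtain ⟨f, m, hKm, hmx⟩ := geometric_hahn_banach_closed_point hK hKc hxK
  obtain ⟨a, haA, ha⟩ := hA.exists_isMaxOn ⟨x, hxA⟩ f.continuous.continuousOn
  exact ⟨a, haA, f, ha, fun y hy => (hKm y hy).trans (hmx.trans_le (ha hxA))⟩

lemma mem_frontier_of_isMaxOn {E : Type*} [NormedAddCommGroup E] [NormedSpace ℝ E] {K : Set E}
    {f : StrongDual ℝ E} (hf : f ≠ 0) {a : E} (ha : a ∈ K) (hmax : IsMaxOn f K a) :
    a ∈ frontier K :=
  ⟨subset_closure ha, fun hint => hf <|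
    (hmax.isLocalMax (mem_interior_iff_mem_nhds.1 hint)).hasFDerivAt_eq_zero f.hasFDerivAt⟩

variable {E : Type*} [NormedAddCommGroup E] [NormedSpace ℝ E] [FiniteDimensional ℝ E]

lemma exists_ne_zero_forall_le_of_notMem_interior {K : Set E} (hK : Convex ℝ K)
    (hne : K.Nonempty) {a : E} (ha : a ∉ interior K) :
    ∃ f : StrongDual ℝ E, f ≠ 0 ∧ ∀ y ∈ K, f y ≤ f a := by
  by_cases hint : (interior K).Nonempty
  · exact geometric_hahn_banach_of_nonempty_interior_point hK ha hint
  rw [hK.interior_nonempty_iff_affineSpan_eq_top,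
    ← AffineSubspace.direction_eq_top_iff_of_nonempty ((affineSpan_nonempty ℝ).2 hne)] at hint
  obtain ⟨f, hf0, hf⟩ := Submodule.exists_le_ker_of_lt_top _ (lt_top_iff_ne_top.2 hint)
  obtain ⟨k, hk⟩ := hne
  have hconst : ∀ y ∈ K, f y = f k := fun y hy => by
    rw [← sub_eq_zero, ← map_sub]
    exact hf (AffineSubspace.vsub_mem_direction (subset_affineSpan ℝ K hy)
      (subset_affineSpan ℝ K hk))
  have hf0' : LinearMap.toContinuousLinearMap f ≠ 0 := by simpa using hf0
  rcases le_total (f k) (f a) with hka | hak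
  · exact ⟨LinearMap.toContinuousLinearMap f, hf0', fun y hy => (hconst y hy).trans_le hka⟩
  · exact ⟨-LinearMap.toContinuousLinearMap f, neg_ne_zero.2 hf0',
      fun y hy => neg_le_neg (hak.trans_eq (hconst y hy).symm)⟩

open Pointwise Topology in
lemma exists_isMaxOn_nonneg_of_ray_notMem {B : Set E} (hB : Convex ℝ B) {b v : E} (hb : b ∈ B)
    (hray : ∀ t : ℝ, 0 < t → b + t • v ∉ B) :
    ∃ w : StrongDual ℝ E, w ≠ 0 ∧ IsMaxOn w B b ∧ 0 ≤ w v := by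
  -- A functional supporting `B - ℝ≥0 v` at `b` supports `B` there and is nonnegative at `v`.
  let K : Set E := B + LinearMap.toSpanSingleton ℝ E (-v) '' Ici 0
  have hK : Convex ℝ K := hB.add ((convex_Ici 0).linear_image _)
  have hmem : ∀ y ∈ B, ∀ s : ℝ, 0 ≤ s → y + s • -v ∈ K := fun y hy s hs =>
    add_mem_add hy ⟨s, hs, rfl⟩
  have hbK : b ∉ interior K := fun hint => by
    have htendsto : Filter.Tendsto (fun t : ℝ => b + t • v) (𝓝[>] 0) (𝓝 b) :=
      (Continuous.tendsto' (by fun_prop) 0 b (by simp)).mono_left nhdsWithin_le_nhds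
    obtain ⟨t, htK, ht⟩ := ((htendsto.eventually (mem_interior_iff_mem_nhds.1 hint)).and
      self_mem_nhdsWithin).exists
    obtain ⟨y, hy, -, ⟨s, hs, rfl⟩, hys⟩ := htK
    have hy' : y = b + (t + s) • v := by
      rw [add_smul, ← add_assoc, ← hys]
      simp
    exact hray (t + s) (add_pos_of_pos_of_nonneg ht hs) (hy' ▸ hy)
  obtain ⟨w, hw0, hw⟩ := exists_ne_zero_forall_le_of_notMem_interior hK
    ⟨_, hmem b hb 0 le_rfl⟩ hbK
  refine ⟨w, hw0, fun y hy => ?_, ?_⟩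
  · simpa using hw _ (hmem y hy 0 le_rfl)
  · simpa using hw _ (hmem b hb 1 zero_le_one)

lemma exists_isMaxOn_mem_segment {B : Set E} (hB : Convex ℝ B) (hBc : IsCompact B) {a x : E}
    (ha : a ∈ B) (hx : x ∉ B) :
    ∃ b ∈ B, b ∈ segment ℝ a x ∧ ∃ w : StrongDual ℝ E, w ≠ 0 ∧ IsMaxOn w B b ∧ w b ≤ w x := by
  have hseg : IsClosed (segment ℝ a x) := by
    rw [← convexHull_pair]
    exact (toFinite {a, x}).isClosed_convexHull ℝ
  obtain ⟨b, ⟨hbB, hbs⟩, hbmin⟩ := (hBc.inter_right hseg).exists_isMinOn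
    ⟨a, ha, left_mem_segment ℝ a x⟩ (f := fun y => dist y x) (by fun_prop)
  have hbx : 0 < dist b x := dist_pos.2 fun h => hx (h ▸ hbB)
  have hray : ∀ t : ℝ, 0 < t → b + t • (x - b) ∉ B := fun t ht hmem => by
    rcases le_total 1 t with ht1 | ht1
    · exact hx (mem_of_add_smul_sub_mem hB hbB ht1 hmem)
    have hmem_seg : b + t • (x - b) ∈ segment ℝ a x :=
      (convex_segment a x).add_smul_sub_mem hbs (right_mem_segment ℝ a x) ⟨ht.le, ht1⟩
    have hle : dist b x ≤ dist (b + t • (x - b)) x := hbmin ⟨hmem, hmem_seg⟩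
    have hdist : dist (b + t • (x - b)) x = (1 - t) * dist b x := by
      rw [add_comm, ← AffineMap.lineMap_apply_module', dist_lineMap_right,
        Real.norm_of_nonneg (sub_nonneg.2 ht1)]
    nlinarith
  obtain ⟨w, hw0, hwB, hwx⟩ := exists_isMaxOn_nonneg_of_ray_notMem hB hbB hray
  exact ⟨b, hbB, hbs, w, hw0, hwB, by simpa using hwx⟩

end Separation

lemma forall_lt_or_forall_gt_of_isPreconnected {X : Type*} [TopologicalSpace X] {S : Set X}
    (hS : IsPreconnected S) {f : X → ℝ} (hf : ContinuousOn f S) {c : ℝ} (hc : ∀ y ∈ S, f y ≠ c) :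
    (∀ y ∈ S, f y < c) ∨ ∀ y ∈ S, c < f y := by
  by_contra! h
  obtain ⟨⟨y, hy, hcy⟩, z, hz, hzc⟩ := h
  obtain ⟨p, hp, hpc⟩ := hS.intermediate_value hz hy hf ⟨hzc, hcy⟩
  exact hc p hp hpc

section SupportFunction

variable {E : Type*} [NormedAddCommGroup E] [NormedSpace ℝ E]

/-- The support function `h_K` of a set `K`, as a function on the dual space: `f` attains the value
`supportFun K f` on the supporting hyperplane of `K` with outer normal `f`. It is only meaningful
for nonempty `K` and `f` bounded above on `K`, e.g. for nonempty compact `K`. -/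
def supportFun (K : Set E) (f : StrongDual ℝ E) : ℝ := sSup (f '' K)

lemma supportFun_eq_of_isMaxOn {K : Set E} {f : StrongDual ℝ E} {p : E} (hp : p ∈ K)
    (hmax : IsMaxOn f K p) : supportFun K f = f p :=
  IsGreatest.csSup_eq ⟨mem_image_of_mem f hp, forall_mem_image.2 hmax⟩

lemma exists_isMaxOn_eq_supportFun {K : Set E} (hK : IsCompact K) (hne : K.Nonempty)
    (f : StrongDual ℝ E) : ∃ p ∈ K, IsMaxOn f K p ∧ f p = supportFun K f := by
  obtain ⟨p, hp, hmax⟩ := hK.exists_isMaxOn hne f.continuous.continuousOn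
  exact ⟨p, hp, hmax, (supportFun_eq_of_isMaxOn hp hmax).symm⟩

lemma supportFun_le {K : Set E} (hne : K.Nonempty) {f : StrongDual ℝ E} {m : ℝ}
    (h : ∀ y ∈ K, f y ≤ m) : supportFun K f ≤ m :=
  csSup_le (hne.image f) (forall_mem_image.2 h)

lemma le_supportFun {K : Set E} (hK : IsCompact K) (f : StrongDual ℝ E) {y : E} (hy : y ∈ K) :
    f y ≤ supportFun K f :=
  le_csSup (hK.image f.continuous).bddAbove (mem_image_of_mem f hy)

lemma continuous_supportFun {K : Set E} (hK : IsCompact K) : Continuous (supportFun K) :=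
  hK.continuous_sSup (f := fun (f : StrongDual ℝ E) y => f y)
    (isBoundedBilinearMap_apply (𝕜 := ℝ)).continuous

lemma ne_zero_and_exists_isMaxOn_of_mem_segment_neg {B : Set E} (hB : IsCompact B)
    {f n v : StrongDual ℝ E} (hf : f ≠ 0) {b z : E} (hb : b ∈ B) (hmax : IsMaxOn f B b)
    (hz : z ∈ B) (hbz : n b < n z) (hv : v ∈ segment ℝ (-n) f) :
    v ≠ 0 ∧ ∃ p ∈ B, n p ≤ n b ∧ IsMaxOn v B p := by
  obtain ⟨s, t, hs, ht, hst, rfl⟩ := hv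
  rcases hs.eq_or_lt with rfl | hs
  · obtain rfl : t = 1 := by linarith
    simpa using ⟨hf, b, hb, le_rfl, hmax⟩
  have hvn : ∀ p ∈ B, s * (n p - n b) ≤ (s • -n + t • f) b - (s • -n + t • f) p := fun p hp => by
    have hfp : f p ≤ f b := hmax hp
    simp only [add_apply, smul_apply, neg_apply, smul_eq_mul]
    nlinarith
  constructor
  · intro h0
    have hvz := hvn z hz
    rw [h0] at hvz
    simp only [zero_apply, sub_zero] at hvz
    nlinarith
  · obtain ⟨p, hp, hpmax⟩ :=
      hB.exists_isMaxOn ⟨b, hb⟩ (s • -n + t • f).continuous.continuousOn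
    have hvb : (s • -n + t • f) b ≤ (s • -n + t • f) p := hpmax hb
    exact ⟨p, hp, by nlinarith [hvn p hp], hpmax⟩

-- Turn the outer normal from `u` to `w` by way of `-n`: all the way, `B` touches its supporting
-- hyperplane in `{n ≤ n a}`, and at some moment this hyperplane also supports `C`.
lemma exists_isMaxOn_union_mem_halfSpace {B C : Set E} (hB : IsCompact B) (hC : IsCompact C)
    {u w n : StrongDual ℝ E} (hu : u ≠ 0) (hw : w ≠ 0) {a b z : E} (ha : a ∈ B)
    (huB : IsMaxOn u B a) (hb : b ∈ B) (hwB : IsMaxOn w B b) (hnb : n b = n a) (hz : z ∈ B)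
    (hnz : n a < n z) (huC : ∀ y ∈ C, u y ≤ u a) (hwC : ∃ y ∈ C, w b ≤ w y) :
    ∃ v : StrongDual ℝ E, v ≠ 0 ∧
      ∃ p ∈ B, n p ≤ n a ∧ ∃ c ∈ C, v c = v p ∧ IsMaxOn v (B ∪ C) p := by
  obtain ⟨y, hyC, hwy⟩ := hwC
  have hpath : IsPreconnected (segment ℝ (-n) u ∪ segment ℝ (-n) w) :=
    (convex_segment _ _).isPreconnected.union (-n) (left_mem_segment ℝ _ _)
      (left_mem_segment ℝ _ _) (convex_segment _ _).isPreconnected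
  have hu_le : supportFun C u ≤ supportFun B u :=
    (supportFun_le ⟨y, hyC⟩ huC).trans (le_supportFun hB u ha)
  have hw_le : supportFun B w ≤ supportFun C w :=
    (supportFun_le ⟨b, hb⟩ hwB).trans (hwy.trans (le_supportFun hC w hyC))
  obtain ⟨v, hv, hvCB⟩ := hpath.intermediate_value₂ (.inl (right_mem_segment ℝ _ _))
    (.inr (right_mem_segment ℝ _ _)) (continuous_supportFun hC).continuousOn
    (continuous_supportFun hB).continuousOn hu_le hw_le
  obtain ⟨hv0, p, hp, hpa, hpmax⟩ : v ≠ 0 ∧ ∃ p ∈ B, n p ≤ n a ∧ IsMaxOn v B p := by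
    rcases hv with hv | hv
    · exact ne_zero_and_exists_isMaxOn_of_mem_segment_neg hB hu ha huB hz hnz hv
    · exact hnb ▸ ne_zero_and_exists_isMaxOn_of_mem_segment_neg hB hw hb hwB hz (hnb ▸ hnz) hv
  obtain ⟨c, hc, hcmax, hvc⟩ := exists_isMaxOn_eq_supportFun hC ⟨y, hyC⟩ v
  have hcp : v c = v p := by rw [hvc, hvCB, supportFun_eq_of_isMaxOn hp hpmax]
  exact ⟨v, hv0, p, hp, hpa, c, hc, hcp,
    fun q hq => hq.elim (fun hqB => hpmax hqB) fun hqC => (hcmax hqC).trans hcp.le⟩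

end SupportFunction

section Determinant

open Submodule

lemma det2_eq_zero_iff_mem_span {e z : Plane} (he : e ≠ 0) : det2 e z = 0 ↔ z ∈ span ℝ {e} := by
  rw [mem_span_singleton]
  constructor
  · intro h
    obtain ⟨i, hi⟩ : ∃ i, e i ≠ 0 := by
      by_contra! h0
      exact he (PiLp.ext h0)
    have h01 : e 0 * z 1 = e 1 * z 0 := sub_eq_zero.1 h
    have hcross : ∀ i j, e i * z j = e j * z i := by simp [Fin.forall_fin_two, h01]
    refine ⟨z i / e i, PiLp.ext fun j => ?_⟩
    simp only [PiLp.smul_apply, smul_eq_mul]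
    field_simp
    linarith [hcross i j]
  · rintro ⟨s, rfl⟩
    simp only [det2, PiLp.smul_apply, smul_eq_mul]
    ring

lemma collinear_of_det2_eq_zero {a b c : Plane} (h : det2 (b - a) (c - a) = 0) :
    Collinear ℝ {a, b, c} := by
  by_cases hba : b - a = 0
  · rw [sub_eq_zero.1 hba, insert_eq_of_mem (mem_insert a _)]
    exact collinear_pair ℝ a c
  rw [det2_eq_zero_iff_mem_span hba, mem_span_singleton] at h
  obtain ⟨s, hs⟩ := h
  refine (collinear_iff_of_mem (mem_insert a _)).2 ⟨b - a, ?_⟩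
  rintro p (rfl | rfl | rfl)
  exacts [⟨0, by simp⟩, ⟨1, by simp⟩, ⟨s, by simp [hs]⟩]

lemma exists_dual_eq_zero_iff_mem_span {e : Plane} (he : e ≠ 0) :
    ∃ n : StrongDual ℝ Plane, ∀ z, n z = 0 ↔ z ∈ span ℝ {e} := by
  refine ⟨e 0 • EuclideanSpace.proj 1 - e 1 • EuclideanSpace.proj 0, fun z => ?_⟩
  rw [← det2_eq_zero_iff_mem_span he]
  simp [det2]

end Determinant

lemma exists_dual_forall_sdiff_lt {A B : Set Plane} (hA : Convex ℝ A) (hB : Convex ℝ B)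
    (hBA : IsPreconnected (B \ A)) {u : StrongDual ℝ Plane} {a x : Plane} (haA : a ∈ A)
    (haB : a ∈ B) (hu : IsMaxOn u B a) (hxA : x ∈ A) (hxB : x ∉ B) (hux : u x < u a) :
    ∃ n : StrongDual ℝ Plane, n x = n a ∧ ∀ y ∈ B \ A, n a < n y := by
  have hxa : x - a ≠ 0 := sub_ne_zero.2 fun h => hxB (h ▸ haB)
  obtain ⟨n, hn⟩ := exists_dual_eq_zero_iff_mem_span hxa
  have hnx : n x = n a := by
    rw [← sub_eq_zero, ← map_sub, hn]
    exact Submodule.mem_span_singleton_self _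
  have hmiss : ∀ y ∈ B \ A, n y ≠ n a := fun y hy hny => by
    rw [← sub_eq_zero, ← map_sub, hn] at hny
    exact hy.2 (hA.segment_subset haA hxA
      (mem_segment_of_isMaxOn (u := u.toLinearMap) hB haB hu hxB hux hy.1 hny))
  rcases forall_lt_or_forall_gt_of_isPreconnected hBA n.continuous.continuousOn hmiss with h | h
  · exact ⟨-n, by simpa using hnx, fun y hy => by simpa using h y hy⟩
  · exact ⟨n, hnx, h⟩

/-- Some line is tangent to all three of `A`, `B`, `C`. This is the configuration that noncrossing
forces as soon as one of three oriented bodies lies in the convex hull of the other two. -/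
def HasCommonTangent (A B C : Set Plane) : Prop :=
  ∃ f : Plane →ₗ[ℝ] ℝ, f ≠ 0 ∧ ∃ c : ℝ,
    TangentLineTo f c A ∧ TangentLineTo f c B ∧ TangentLineTo f c C

lemma HasCommonTangent.swap_left {A B C : Set Plane} :
    HasCommonTangent A B C → HasCommonTangent B A C :=
  fun ⟨f, hf, c, hA, hB, hC⟩ => ⟨f, hf, c, hB, hA, hC⟩

lemma HasCommonTangent.swap_right {A B C : Set Plane} :
    HasCommonTangent A B C → HasCommonTangent A C B :=
  fun ⟨f, hf, c, hA, hB, hC⟩ => ⟨f, hf, c, hA, hC, hB⟩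

lemma NoncrossingPair.symm {A B : Set Plane} (h : NoncrossingPair A B) : NoncrossingPair B A :=
  ⟨h.2, h.1⟩

lemma NoncrossingPair.ne {A B : Set Plane} (h : NoncrossingPair A B) : A ≠ B := by
  rintro rfl
  simpa using h.1.nonempty

section CommonTangent

variable {A B C : Set Plane}

lemma hasCommonTangent_of_isMaxOn {v : StrongDual ℝ Plane} (hv : v ≠ 0)
    (hABC : A ⊆ convexHull ℝ (B ∪ C)) {a b c : Plane} (ha : a ∈ A) (hb : b ∈ B) (hc : c ∈ C)
    (hmax : IsMaxOn v (B ∪ C) a) (hba : v b = v a) (hca : v c = v a) : HasCommonTangent A B C := by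
  have hmax' : ∀ y ∈ B ∪ C, v.toLinearMap y ≤ v a := hmax
  refine ⟨v.toLinearMap, fun h => hv (ContinuousLinearMap.coe_injective h), v a,
    ⟨⟨a, ha, rfl⟩, .inl fun y hy => ?_⟩, ⟨⟨b, hb, hba⟩, .inl fun y hy => ?_⟩,
    ⟨⟨c, hc, hca⟩, .inl fun y hy => ?_⟩⟩
  · exact le_of_mem_convexHull hmax' (hABC hy)
  · exact hmax' y (.inl hy)
  · exact hmax' y (.inr hy)

lemma hasCommonTangent_of_isMaxOn_of_forall_lt (hA : Convex ℝ A) (hB : ConvexBody2 B)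
    (hC : ConvexBody2 C) (hAB : NoncrossingPair A B) (hABC : A ⊆ convexHull ℝ (B ∪ C))
    {u : StrongDual ℝ Plane} {a : Plane} (haA : a ∈ A) (huB : IsMaxOn u B a)
    (huC : ∀ y ∈ C, u y < u a) : HasCommonTangent A B C := by
  obtain ⟨hBne, hBc, hBconv⟩ := hB
  have face : ∀ {w : StrongDual ℝ Plane} {m : ℝ}, (∀ y ∈ B, w y ≤ m) → (∀ y ∈ C, w y < m) →
      ∀ y ∈ A, m ≤ w y → y ∈ B := fun {w m} hwB hwC y hy hm => hBconv.convexHull_eq ▸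
    mem_convexHull_left_of_le (f := w.toLinearMap) hBne hC.1 hwB hwC (hABC hy) hm
  have haB : a ∈ B := face huB huC a haA le_rfl
  obtain ⟨x, hxA, hxB⟩ := hAB.1.nonempty
  obtain ⟨z, hz⟩ := hAB.2.nonempty
  have hux : u x < u a := not_le.1 fun h => hxB (face huB huC x hxA h)
  have hu0 : u ≠ 0 := by
    rintro rfl
    exact lt_irrefl _ hux
  obtain ⟨n, hnx, hn⟩ :=
    exists_dual_forall_sdiff_lt hA hBconv hAB.2.isPreconnected haA haB huB hxA hxB hux
  obtain ⟨b, hbB, hbax, w, hw0, hwB, hwx⟩ := exists_isMaxOn_mem_segment hBconv hBc haB hxB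
  have hnb : n b = n a :=
    (convex_hyperplane n.isLinear (n a)).segment_subset rfl hnx hbax
  have hwC : ∃ y ∈ C, w b ≤ w y := by
    by_contra! h
    exact hxB (face hwB h x hxA hwx)
  obtain ⟨v, hv0, p, hpB, hpa, c, hcC, hcp, hmax⟩ := exists_isMaxOn_union_mem_halfSpace hBc hC.2.1
    hu0 hw0 haB huB hbB hwB hnb hz.1 (hn z hz) (fun y hy => (huC y hy).le) hwC
  have hpA : p ∈ A := by
    by_contra hpA
    exact (hn p ⟨hpB, hpA⟩).not_ge hpa
  exact hasCommonTangent_of_isMaxOn hv0 hABC hpA hpB hcC hmax rfl hcp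

lemma hasCommonTangent_of_mem_frontier (hA : Convex ℝ A) (hB : ConvexBody2 B)
    (hC : ConvexBody2 C) (hAB : NoncrossingPair A B) (hAC : NoncrossingPair A C)
    (hABC : A ⊆ convexHull ℝ (B ∪ C)) {a : Plane} (haA : a ∈ A)
    (ha : a ∈ frontier (convexHull ℝ (B ∪ C))) : HasCommonTangent A B C := by
  obtain ⟨f, hf0, hf⟩ := exists_ne_zero_forall_le_of_notMem_interior (convex_convexHull ℝ _)
    ⟨a, hABC haA⟩ ha.2
  have hmax : IsMaxOn f (B ∪ C) a := fun y hy => hf y (subset_convexHull ℝ _ hy)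
  by_cases hfB : ∃ b ∈ B, f b = f a
  · by_cases hfC : ∃ c ∈ C, f c = f a
    · obtain ⟨b, hb, hba⟩ := hfB
      obtain ⟨c, hc, hca⟩ := hfC
      exact hasCommonTangent_of_isMaxOn hf0 hABC haA hb hc hmax hba hca
    · push Not at hfC
      exact hasCommonTangent_of_isMaxOn_of_forall_lt hA hB hC hAB hABC haA
        (hmax.on_subset subset_union_left) fun y hy => (hmax (.inr hy)).lt_of_ne (hfC y hy)
  · push Not at hfB
    exact (hasCommonTangent_of_isMaxOn_of_forall_lt hA hC hB hAC (union_comm B C ▸ hABC) haA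
      (hmax.on_subset subset_union_right)
      fun y hy => (hmax (.inl hy)).lt_of_ne (hfB y hy)).swap_right

lemma not_subset_convexHull_of_mem_frontier (hA : Convex ℝ A) (hB : ConvexBody2 B)
    (hC : ConvexBody2 C) (hAB : NoncrossingPair A B) (hAC : NoncrossingPair A C)
    (hline : ¬ HasCommonTangent A B C) {a : Plane}
    (ha : a ∈ A ∩ frontier (convexHull ℝ (A ∪ B ∪ C))) : ¬ A ⊆ convexHull ℝ (B ∪ C) := fun h =>
  hline <| hasCommonTangent_of_mem_frontier hA hB hC hAB hAC h ha.1 <| by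
    rw [← convexHull_union_eq_right_iff.2 h, ← union_assoc]
    exact ha.2

end CommonTangent

section ConvexPosition

variable {A B C : Set Plane}

lemma exists_mem_frontier_forall_lt (hA : IsCompact A) (hB : ConvexBody2 B) (hC : ConvexBody2 C)
    (h : ¬ A ⊆ convexHull ℝ (B ∪ C)) :
    ∃ a ∈ A ∩ frontier (convexHull ℝ (A ∪ B ∪ C)), ∃ f : Plane →ₗ[ℝ] ℝ,
      (∀ y ∈ B, f y < f a) ∧ ∀ y ∈ C, f y < f a := by
  have hclosed : IsClosed (convexHull ℝ (B ∪ C)) := by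
    rw [hB.2.2.convexHull_union hC.2.2 hB.1 hC.1]
    exact (isCompact_convexJoin hB.2.1 hC.2.1).isClosed
  obtain ⟨a, haA, f, hfA, hf⟩ :=
    exists_isMaxOn_forall_lt_of_not_subset hA (convex_convexHull ℝ _) hclosed h
  have hfBC : ∀ y ∈ B ∪ C, f y < f a := fun y hy => hf y (subset_convexHull ℝ _ hy)
  have hf0 : f ≠ 0 := by
    rintro rfl
    obtain ⟨b, hb⟩ := hB.1
    simpa using hfBC b (.inl hb)
  have hmax : IsMaxOn f (convexHull ℝ (A ∪ B ∪ C)) a := fun y hy =>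
    le_of_mem_convexHull (f := f.toLinearMap) (fun z hz => by
      rw [union_assoc] at hz
      exact hz.elim (fun hz => hfA hz) fun hz => (hfBC z hz).le) hy
  exact ⟨a, ⟨haA, mem_frontier_of_isMaxOn hf0 (subset_convexHull ℝ _ (.inl (.inl haA))) hmax⟩,
    f.toLinearMap, fun y hy => hfBC y (.inl hy), fun y hy => hfBC y (.inr hy)⟩

lemma convexPos_iff_not_subset_convexHull {F : Set (Set Plane)} :
    ConvexPos F ↔ ∀ A ∈ F, ¬ A ⊆ convexHull ℝ (⋃₀ (F \ {A})) := by
  refine forall₂_congr fun A hA => not_congr ?_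
  rw [← convexHull_union_eq_right_iff, ← sUnion_insert, insert_sdiff_singleton,
    insert_eq_of_mem hA]

lemma convexPos_triple_iff (hAB : A ≠ B) (hBC : B ≠ C) (hAC : A ≠ C) :
    ConvexPos {A, B, C} ↔ ¬ A ⊆ convexHull ℝ (B ∪ C) ∧ ¬ B ⊆ convexHull ℝ (A ∪ C) ∧
      ¬ C ⊆ convexHull ℝ (A ∪ B) := by
  have hA : ({A, B, C} \ {A} : Set (Set Plane)) = {B, C} := by grind
  have hB : ({A, B, C} \ {B} : Set (Set Plane)) = {A, C} := by grind
  have hC : ({A, B, C} \ {C} : Set (Set Plane)) = {A, B} := by grind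
  simp only [convexPos_iff_not_subset_convexHull, mem_insert_iff, mem_singleton_iff,
    forall_eq_or_imp, forall_eq, hA, hB, hC, sUnion_pair]

lemma cwOriented_or_ccwOriented_iff :
    (CWOriented A B C ∨ CCWOriented A B C) ↔
      ∃ a ∈ A ∩ frontier (convexHull ℝ (A ∪ B ∪ C)),
      ∃ b ∈ B ∩ frontier (convexHull ℝ (A ∪ B ∪ C)),
      ∃ c ∈ C ∩ frontier (convexHull ℝ (A ∪ B ∪ C)), det2 (b - a) (c - a) ≠ 0 := by
  simp only [CWOriented, CCWOriented, ne_iff_lt_or_gt, and_or_left, exists_or]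

end ConvexPosition

theorem triple_convexPos_iff_oriented_general (A B C : Set Plane)
    (hbody : ConvexBody2 A ∧ ConvexBody2 B ∧ ConvexBody2 C)
    (hnc : NoncrossingPair A B ∧ NoncrossingPair B C ∧ NoncrossingPair A C)
    (hline : ¬ HasCommonTangent A B C) :
    ConvexPos {A, B, C} ↔ (CWOriented A B C ∨ CCWOriented A B C) := by
  obtain ⟨hA, hB, hC⟩ := hbody
  obtain ⟨hAB, hBC, hAC⟩ := hnc
  have hBAC : B ∪ A ∪ C = A ∪ B ∪ C := by rw [union_comm B A]
  have hCAB : C ∪ A ∪ B = A ∪ B ∪ C := by rw [union_assoc, union_comm]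
  rw [convexPos_triple_iff hAB.ne hBC.ne hAC.ne, cwOriented_or_ccwOriented_iff]
  constructor
  · rintro ⟨hAhull, hBhull, hChull⟩
    obtain ⟨a, ha, f, hfB, hfC⟩ := exists_mem_frontier_forall_lt hA.2.1 hB hC hAhull
    obtain ⟨b, hb, g, hgA, hgC⟩ := exists_mem_frontier_forall_lt hB.2.1 hA hC hBhull
    obtain ⟨c, hc, h, hhA, hhB⟩ := exists_mem_frontier_forall_lt hC.2.1 hA hB hChull
    refine ⟨a, ha, b, hBAC ▸ hb, c, hCAB ▸ hc, fun hdet => ?_⟩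
    exact not_collinear_of_forall_lt (hfB b hb.1) (hfC c hc.1) (hgA a ha.1) (hgC c hc.1)
      (hhA a ha.1) (hhB b hb.1) (collinear_of_det2_eq_zero hdet)
  · rintro ⟨a, ha, b, hb, c, hc, -⟩
    exact ⟨not_subset_convexHull_of_mem_frontier hA.2.2 hB hC hAB hAC hline ha,
      not_subset_convexHull_of_mem_frontier hB.2.2 hA hC hAB.symm hBC
        (fun h => hline h.swap_left) (hBAC.symm ▸ hb),
      not_subset_convexHull_of_mem_frontier hC.2.2 hA hB hAC.symm hBC.symm
        (fun h => hline h.swap_left.swap_right) (hCAB.symm ▸ hc)⟩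

/-- A triple of noncrossing convex bodies is in convex position iff it has an
orientation. -/
theorem triple_convexPos_iff_oriented (A B C : Set Plane)
    (hAB : A ≠ B) (hBC : B ≠ C) (hAC : A ≠ C)
    (hbody : ConvexBody2 A ∧ ConvexBody2 B ∧ ConvexBody2 C)
    (hnc : NoncrossingPair A B ∧ NoncrossingPair B C ∧ NoncrossingPair A C)
    (htan : ¬ TangentBodies A B ∧ ¬ TangentBodies B C ∧ ¬ TangentBodies A C)
    (hline : ∀ f : Plane →ₗ[ℝ] ℝ, f ≠ 0 → ∀ c : ℝ,
      ¬ (TangentLineTo f c A ∧ TangentLineTo f c B ∧ TangentLineTo f c C)) :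
    ConvexPos {A, B, C} ↔ (CWOriented A B C ∨ CCWOriented A B C) :=
  triple_convexPos_iff_oriented_general A B C hbody hnc fun ⟨f, hf, c, h⟩ => hline f hf c h
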